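/- arXiv:1912.10710 — 2 statements merged into one kernel-verified Lean document; each statement's English description precedes it below -/
import Mathlib

section
/- Let $K$ be any field and let $F = K((t))$ be the field of formal Laurent series over $K$. Let $W$ be an elliptic curve over $F$ (a Weierstrass curve over $F$ with nonzero discriminant). Then the rank of the group $W(F)$ of $F$-rational points of $W$ is infinite, i.e. the $\mathbb{Q}$-vector space $W(F) \otimes_{\mathbb{Z}} \mathbb{Q}$ is infinite-dimensional. -/
open TensorProduct

section Helpers
set_option linter.unusedSectionVars false
open WeierstrassCurve Affine

section
variable {L : Type*} [Field L] [IsAlgClosed L] [DecidableEq L] (W : WeierstrassCurve.Affine L)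

theorem exists_pt (hΔ : W.Δ ≠ 0) (x : L) : ∃ y, W.Nonsingular x y := by
  have : W.IsElliptic := ⟨isUnit_iff_ne_zero.mpr hΔ⟩
  obtain ⟨y, hy⟩ := IsAlgClosed.exists_root
    (Polynomial.X ^ 2 + Polynomial.C (W.a₁ * x + W.a₃) * Polynomial.X
      - Polynomial.C (x ^ 3 + W.a₂ * x ^ 2 + W.a₄ * x + W.a₆) : Polynomial L) (by
      have : (Polynomial.X ^ 2 + Polynomial.C (W.a₁ * x + W.a₃) * Polynomial.X
        - Polynomial.C (x ^ 3 + W.a₂ * x ^ 2 + W.a₄ * x + W.a₆) : Polynomial L).degree = 2 := by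
        compute_degree!
      rw [this]; norm_num)
  refine ⟨y, equation_iff_nonsingular.mp ?_⟩
  rw [equation_iff']
  simp only [Polynomial.IsRoot.def, Polynomial.eval_sub, Polynomial.eval_add, Polynomial.eval_pow,
    Polynomial.eval_X, Polynomial.eval_mul, Polynomial.eval_C] at hy
  linear_combination hy

theorem not_killed_two (hΔ : W.Δ ≠ 0) (h : ∀ P : W.Point, 2 • P = 0) : False := by
  have key : ∀ x : L, 4 * x ^ 3 + W.b₂ * x ^ 2 + 2 * W.b₄ * x + W.b₆ = 0 := by
    intro x
    obtain ⟨y, hxy⟩ := exists_pt W hΔ x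
    have h2 := h (.some x y hxy)
    rw [two_nsmul] at h2
    have hy : y = W.negY x y := by
      by_contra hne
      rw [Point.add_self_of_Y_ne hne] at h2
      exact Point.some_ne_zero _ h2
    have he := (equation_iff' ..).mp hxy.1
    rw [negY] at hy
    simp only [b₂, b₄, b₆]
    linear_combination -4 * he + (2 * y + W.a₁ * x + W.a₃) * hy
  have hp : (Polynomial.C 4 * Polynomial.X ^ 3 + Polynomial.C W.b₂ * Polynomial.X ^ 2 +
      Polynomial.C (2 * W.b₄) * Polynomial.X + Polynomial.C W.b₆ : Polynomial L) = 0 := by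
    apply Polynomial.funext
    intro x
    simpa using key x
  have c3 := congrArg (fun p => Polynomial.coeff p 3) hp
  have c2 := congrArg (fun p => Polynomial.coeff p 2) hp
  have c0 := congrArg (fun p => Polynomial.coeff p 0) hp
  simp [Polynomial.coeff_X, Polynomial.coeff_C] at c3 c2 c0
  have t : (2 : L) = 0 := by
    have : (2 : L) * 2 = 0 := by linear_combination c3
    simpa using this
  apply hΔ
  rw [Δ]
  linear_combination (-W.b₂ * W.b₈ + 9 * W.b₄ * W.b₆) * c2 - 27 * W.b₆ * c0 - 4 * W.b₄ ^ 3 * t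

theorem exists_two_tors (hΔ : W.Δ ≠ 0) (h2 : (2 : L) ≠ 0) : ∃ P : W.Point, P ≠ 0 ∧ 2 • P = 0 := by
  have : W.IsElliptic := ⟨isUnit_iff_ne_zero.mpr hΔ⟩
  have h4 : (4 : L) ≠ 0 := by
    have : (4 : L) = 2 * 2 := by norm_num
    rw [this]; exact mul_ne_zero h2 h2
  obtain ⟨x, hx⟩ := IsAlgClosed.exists_root
    (Polynomial.C 4 * Polynomial.X ^ 3 + Polynomial.C W.b₂ * Polynomial.X ^ 2 +
      Polynomial.C (2 * W.b₄) * Polynomial.X + Polynomial.C W.b₆ : Polynomial L) (by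
      rw [show (Polynomial.C 4 * Polynomial.X ^ 3 + Polynomial.C W.b₂ * Polynomial.X ^ 2 +
      Polynomial.C (2 * W.b₄) * Polynomial.X + Polynomial.C W.b₆ : Polynomial L).degree = 3 by
        compute_degree!]
      norm_num)
  simp only [Polynomial.IsRoot.def, Polynomial.eval_add, Polynomial.eval_pow,
    Polynomial.eval_X, Polynomial.eval_mul, Polynomial.eval_C, b₂, b₄, b₆] at hx
  obtain ⟨y, hy⟩ : ∃ y, 2 * y = -(W.a₁ * x + W.a₃) := ⟨-(W.a₁ * x + W.a₃) / 2, by field_simp⟩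
  have hE : W.Equation x y := by
    rw [equation_iff']
    apply mul_left_cancel₀ h4
    linear_combination -hx + (2 * y + W.a₁ * x + W.a₃) * hy
  refine ⟨.some x y (equation_iff_nonsingular.mp hE), Point.some_ne_zero _, ?_⟩
  rw [two_nsmul]
  apply Point.add_self_of_Y_eq
  rw [negY]
  linear_combination hy

theorem three_iff {x y : L} (hxy : W.Nonsingular x y) :
    3 • (Point.some x y hxy) = 0 ↔
      3 * x ^ 4 + W.b₂ * x ^ 3 + 3 * W.b₄ * x ^ 2 + 3 * W.b₆ * x + W.b₈ = 0 := by
  have he := (equation_iff' ..).mp hxy.1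
  by_cases hy : y = W.negY x y
  · have h2 := Point.add_self_of_Y_eq (h₁ := hxy) hy
    rw [show 3 • (Point.some x y hxy) = (Point.some x y hxy) + (Point.some x y hxy)
      + (Point.some x y hxy) by abel, h2, zero_add]
    refine iff_of_false (Point.some_ne_zero _) fun h3 => ?_
    rw [negY] at hy
    have hns := ((nonsingular_iff' ..).mp hxy).2
    have hy0 : 2 * y + W.a₁ * x + W.a₃ = 0 := by linear_combination hy
    simp only [hy0, ne_eq, not_true_eq_false, or_false] at hns
    apply hns
    simp only [b₂, b₄, b₆, b₈] at h3
    have : (W.a₁ * y - (3 * x ^ 2 + 2 * W.a₂ * x + W.a₄)) ^ 2 = 0 := by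
      linear_combination -h3 + ((W.a₂ + 3 * x) * (2 * y + W.a₁ * x + W.a₃)
        - W.a₁ * (3 * x ^ 2 + 2 * W.a₂ * x + W.a₄ - W.a₁ * y)) * hy0
        - (12 * x + 4 * W.a₂ + W.a₁ ^ 2) * he
    simpa using this
  · have hd : y - W.negY x y ≠ 0 := sub_ne_zero.mpr hy
    have h2 := Point.add_self_of_Y_ne (h₁ := hxy) hy
    have step : 3 • (Point.some x y hxy) = 0 ↔ W.addX x x (W.slope x x y y) = x := by
      rw [Point.X_eq_iff (h₁ := nonsingular_add hxy hxy fun hxy => hy hxy.right) (h₂ := hxy), ← h2]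
      constructor
      · intro h
        right
        rw [eq_neg_iff_add_eq_zero, ← h]; abel
      · rintro (h | h)
        · exact absurd (by simp at h) (Point.some_ne_zero hxy)
        · rw [eq_neg_iff_add_eq_zero] at h
          rw [← h]; abel
    rw [step, slope_of_Y_ne rfl hy, addX]
    have hd' : y - W.negY x y = 2 * y + W.a₁ * x + W.a₃ := by rw [negY]; ring
    rw [hd'] at hd ⊢
    rw [← sub_eq_zero]
    have gen : ∀ N D Ψ : L, D ≠ 0 → N ^ 2 + W.a₁ * N * D - (W.a₂ + 3 * x) * D ^ 2 + Ψ = 0 →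
        (N / D) ^ 2 + W.a₁ * (N / D) - W.a₂ - x - x - x = -Ψ / D ^ 2 := by
      intro N D Ψ hD h
      field_simp
      linear_combination h
    have := gen (3 * x ^ 2 + 2 * W.a₂ * x + W.a₄ - W.a₁ * y) (2 * y + W.a₁ * x + W.a₃)
      (3 * x ^ 4 + W.b₂ * x ^ 3 + 3 * W.b₄ * x ^ 2 + 3 * W.b₆ * x + W.b₈) hd (by
        simp only [b₂, b₄, b₆, b₈]
        linear_combination -(12 * x + 4 * W.a₂ + W.a₁ ^ 2) * he)
    rw [this, div_eq_zero_iff, neg_eq_zero]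
    simp [hd]

theorem not_killed (hΔ : W.Δ ≠ 0) (p : ℕ) (hp : p.Prime) (h : ∀ P : W.Point, p • P = 0) :
    False := by
  by_cases hp2 : p = 2
  · subst hp2; exact not_killed_two W hΔ h
  have aux : ∀ (q : ℕ) (P : W.Point), p.Coprime q → q • P = 0 → P = 0 := by
    intro q P hq hP
    have h1 : addOrderOf P ∣ p := addOrderOf_dvd_of_nsmul_eq_zero (h P)
    have h2 : addOrderOf P ∣ q := addOrderOf_dvd_of_nsmul_eq_zero hP
    have h3 := Nat.dvd_gcd h1 h2
    rw [hq.gcd_eq_one, Nat.dvd_one] at h3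
    exact AddMonoid.addOrderOf_eq_one_iff.mp h3
  by_cases h2 : (2 : L) = 0
  · have h3 : (3 : L) ≠ 0 := by
      intro h3
      have : (1 : L) = 0 := by linear_combination h3 - h2
      exact one_ne_zero this
    have hdeg : (Polynomial.C 3 * Polynomial.X ^ 4 + Polynomial.C W.b₂ * Polynomial.X ^ 3 +
        Polynomial.C (3 * W.b₄) * Polynomial.X ^ 2 + Polynomial.C (3 * W.b₆) * Polynomial.X +
          Polynomial.C W.b₈ : Polynomial L).degree = 4 := by
      compute_degree!
    by_cases hp3 : p = 3
    · subst hp3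
      have : (Polynomial.C 3 * Polynomial.X ^ 4 + Polynomial.C W.b₂ * Polynomial.X ^ 3 +
        Polynomial.C (3 * W.b₄) * Polynomial.X ^ 2 + Polynomial.C (3 * W.b₆) * Polynomial.X +
          Polynomial.C W.b₈ : Polynomial L) = 0 := by
        apply Polynomial.funext
        intro x
        obtain ⟨y, hxy⟩ := exists_pt W hΔ x
        simpa using (three_iff W hxy).mp (h _)
      rw [this] at hdeg
      simp at hdeg
    · obtain ⟨x, hx⟩ := IsAlgClosed.exists_root _ (by rw [hdeg]; norm_num)
      obtain ⟨y, hxy⟩ := exists_pt W hΔ x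
      refine Point.some_ne_zero hxy (aux 3 _ ?_ ((three_iff W hxy).mpr (by simpa using hx)))
      exact (Nat.coprime_primes hp Nat.prime_three).mpr hp3
  · obtain ⟨P, hP, hP2⟩ := exists_two_tors W hΔ h2
    exact hP (aux 2 P ((Nat.coprime_primes hp Nat.prime_two).mpr hp2) hP2)
end

theorem exists_aut {k L : Type*} [Field k] [Field L] [Algebra k L] [IsAlgClosed L]
    {x x' : L} (hx : Transcendental k x) (hx' : Transcendental k x') :
    ∃ σ : L →ₐ[k] L, σ x = x' := by
  have h1 : AlgebraicIndepOn k id ({x} : Set L) :=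
    (algebraicIndependent_singleton_iff (⟨x, rfl⟩ : ({x} : Set L))).mpr hx
  have h2 : AlgebraicIndepOn k id ({x'} : Set L) :=
    (algebraicIndependent_singleton_iff (⟨x', rfl⟩ : ({x'} : Set L))).mpr hx'
  obtain ⟨s, hs, hsb⟩ := exists_isTranscendenceBasis_superset h1
  obtain ⟨s', hs', hsb'⟩ := exists_isTranscendenceBasis_superset h2
  have hc := hsb.cardinalMk_eq hsb'
  obtain ⟨e⟩ := Cardinal.eq.1 hc
  classical
  let i : s := ⟨x, hs rfl⟩
  let i' : s' := ⟨x', hs' rfl⟩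
  let e' := e.trans (Equiv.swap (e i) i')
  have he' : e' i = i' := by simp [e']
  let v : s → L := Subtype.val
  let w : s → L := Subtype.val ∘ e'
  have hv : IsTranscendenceBasis k v := hsb
  have hw : IsTranscendenceBasis k w := by
    have := hsb'.comp_equiv e'
    exact this
  have := IsAlgClosed.isAlgClosure_of_transcendence_basis v hv
  have := IsAlgClosed.isAlgClosure_of_transcendence_basis w hw
  let E : Algebra.adjoin k (Set.range v) ≃ₐ[k] Algebra.adjoin k (Set.range w) :=
    hv.1.aevalEquiv.symm.trans hw.1.aevalEquiv
  let τ := IsAlgClosure.equivOfEquiv L L E.toRingEquiv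
  have hτ : ∀ a, τ (algebraMap (Algebra.adjoin k (Set.range v)) L a) = algebraMap (Algebra.adjoin k (Set.range w)) L (E a) := fun a =>
    IsAlgClosure.equivOfEquiv_algebraMap (R := Algebra.adjoin k (Set.range w)) (S := Algebra.adjoin k (Set.range v)) L L E.toRingEquiv a
  refine ⟨⟨τ.toRingHom, fun c => ?_⟩, ?_⟩
  · have := hτ (algebraMap k _ c)
    rw [AlgEquiv.commutes] at this
    exact this
  · have := hτ (hv.1.aevalEquiv (MvPolynomial.X i))
    simp only [E, AlgEquiv.trans_apply, AlgEquiv.symm_apply_apply,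
      AlgebraicIndependent.algebraMap_aevalEquiv, MvPolynomial.aeval_X] at this
    simpa [v, w, he', i, i'] using this

open scoped Classical

/-- points with a prescribed countable set of x-coordinates -/
theorem countable_pts {F : Type*} [Field F] (W : WeierstrassCurve.Affine F) (S : Set F)
    (hS : S.Countable) : {P : W.Point | ∀ x y h, P = .some x y h → x ∈ S}.Countable := by
  have h1 : ∀ s ∈ S, {P : W.Point | P.xRep = ![s, 1]}.Countable := by
    intro s _
    by_cases hne : ∃ P₀ : W.Point, P₀.xRep = ![s, 1]
    · obtain ⟨P₀, h0⟩ := hne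
      refine (Set.toFinite {P₀, -P₀}).countable.mono ?_
      intro P hP
      have hP' : P.xRep = ![s, 1] := hP
      rw [← h0, Point.xRep_eq_xRep_iff] at hP'
      simpa using hP'
    · refine Set.countable_empty.mono ?_
      intro P hP
      exact hne ⟨P, hP⟩
  refine ((hS.biUnion h1).union (Set.countable_singleton 0)).mono ?_
  intro P hP
  rcases P with _ | ⟨x, y, h⟩
  · right; rfl
  · left
    simp only [Set.mem_iUnion]
    exact ⟨x, hP x y h rfl, rfl⟩

theorem countable_ptorsion {k F : Type*} [Field k] [Countable k] [Field F] [Algebra k F]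
    (W : WeierstrassCurve k) (hΔ : W.Δ ≠ 0) (hunc : Uncountable (W⁄F).Point)
    (p : ℕ) (hp : p.Prime) : {P : (W⁄F).Point | p • P = 0}.Countable := by
  refine (countable_pts (W⁄F) {x | IsAlgebraic k x} (Algebraic.countable k F)).mono ?_
  rintro P hP x y h rfl
  by_contra hx
  change Transcendental k x at hx
  let L := AlgebraicClosure F
  let ι : F →ₐ[k] L := IsScalarTower.toAlgHom k F L
  have hιinj : Function.Injective ι := ι.injective
  have hxL : Transcendental k (ι x) := 
    fun h => hx ((isAlgebraic_algHom_iff ι hιinj).mp h)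
  have huncL : Uncountable (W⁄L).Point :=
    (Point.map_injective (W' := W) ι).uncountable
  let Q := Point.map (W' := W) ι (.some x y h)
  have hQ : p • Q = 0 := by
    rw [← map_nsmul]
    have : p • (Point.some x y h) = 0 := hP
    rw [this, map_zero]
  have hΔL : (W⁄L).Δ ≠ 0 := by
    change (W.map (algebraMap k L)).Δ ≠ 0
    rw [WeierstrassCurve.map_Δ]
    simpa using hΔ
  have hgen : ∀ x' y' h', Transcendental k x' → p • (Point.some x' y' h' : (W⁄L).Point) = 0 := by
    intro x' y' h' hx'
    obtain ⟨σ, hσ⟩ := exists_aut hxL hx'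
    have h1 : p • (Point.map (W' := W) σ Q) = 0 := by rw [← map_nsmul, hQ, map_zero]
    have h2 : (Point.map (W' := W) σ Q).xRep = (Point.some x' y' h' : (W⁄L).Point).xRep := by
      simp only [Q, Point.map_some, Point.xRep_some, hσ]
    rw [Point.xRep_eq_xRep_iff] at h2
    rcases h2 with h2 | h2
    · rw [← h2, h1]
    · rw [h2, smul_neg, neg_eq_zero] at h1
      exact h1
  have hC := countable_pts (W⁄L) {x | IsAlgebraic k x} (Algebraic.countable k L)
  set C := {P : (W⁄L).Point | ∀ x y h, P = .some x y h → x ∈ {x : L | IsAlgebraic k x}} with hCdef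
  have hgen' : ∀ R : (W⁄L).Point, R ∉ C → p • R = 0 := by
    intro R hR
    simp only [hCdef, Set.mem_ofPred_eq, not_forall] at hR
    obtain ⟨x', y', h', rfl, hx'⟩ := hR
    exact hgen x' y' h' hx'
  refine not_killed (W⁄L) hΔL p hp fun S => ?_
  have hC2 : ((fun R => R - S) '' C ∪ C).Countable := (hC.image _).union hC
  obtain ⟨R, hR⟩ : ∃ R, R ∉ ((fun R => R - S) '' C ∪ C) := by
    by_contra! hall
    exact Set.not_countable_univ (hC2.mono fun R _ => hall R)
  have hR1 : R ∉ C := fun h => hR (Or.inr h)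
  have hR2 : R + S ∉ C := fun h => hR (Or.inl ⟨R + S, h, by simp⟩)
  have := hgen' _ hR2
  rwa [nsmul_add, hgen' _ hR1, zero_add] at this

theorem countable_torsion {G : Type*} [AddCommGroup G]
    (h : ∀ p : ℕ, p.Prime → {g : G | p • g = 0}.Countable) :
    ∀ n : ℕ, n ≠ 0 → {g : G | n • g = 0}.Countable := by
  have hfib : ∀ p : ℕ, p.Prime → ∀ b : G, {g : G | p • g = b}.Countable := by
    intro p hp b
    by_cases hne : ∃ a : G, p • a = b
    · obtain ⟨a, rfl⟩ := hne
      refine ((h p hp).image (fun g => a + g)).mono ?_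
      intro g hg
      refine ⟨g - a, ?_, by simp⟩
      have hg' : p • g = p • a := hg
      simp [smul_sub, hg']
    · refine Set.countable_empty.mono fun g hg => hne ⟨g, hg⟩
  intro n
  induction n using induction_on_primes with
  | zero => intro h; exact absurd rfl h
  | one => intro _; simp
  | prime_mul p a hp ih =>
    intro hpa
    have ha : a ≠ 0 := by rintro rfl; simp at hpa
    refine ((ih ha).biUnion fun b _ => hfib p hp b).mono ?_
    intro g hg
    simp only [Set.mem_iUnion]
    refine ⟨p • g, ?_, rfl⟩
    have hg' : (p * a) • g = 0 := hg
    change a • p • g = 0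
    rw [← mul_smul, mul_comm, hg']

open TensorProduct in
theorem rank_inf {G : Type*} [AddCommGroup G] [Uncountable G]
    (h : ∀ n : ℕ, n ≠ 0 → {g : G | n • g = 0}.Countable) :
    Cardinal.aleph0 ≤ Module.rank ℚ (ℚ ⊗[ℤ] G) := by
  by_contra! hlt
  have : Module.Finite ℚ (ℚ ⊗[ℤ] G) := Module.rank_lt_aleph0_iff.mp hlt
  have hcV : Countable (ℚ ⊗[ℤ] G) := by
    let b := Module.finBasis ℚ (ℚ ⊗[ℤ] G)
    exact b.equivFun.injective.countable
  let f : G →ₗ[ℤ] ℚ ⊗[ℤ] G := TensorProduct.mk ℤ ℚ G 1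
  have hker : {g : G | f g = 0}.Countable := by
    refine (Set.countable_iUnion fun n : {n : ℕ // n ≠ 0} => h n.1 n.2).mono ?_
    intro g hg
    have hg' : f g = 0 := hg
    have : IsLocalizedModule (nonZeroDivisors ℤ) f :=
      (isLocalizedModule_iff_isBaseChange (nonZeroDivisors ℤ) ℚ _).mpr
        (TensorProduct.isBaseChange ℤ G ℚ)
    rw [IsLocalizedModule.eq_zero_iff (nonZeroDivisors ℤ) f] at hg'
    obtain ⟨⟨c, hc⟩, hcg⟩ := hg'
    have hc0 : c ≠ 0 := nonZeroDivisors.ne_zero hc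
    have hcg' : c • g = 0 := hcg
    simp only [Set.mem_iUnion]
    refine ⟨⟨c.natAbs, by simpa using hc0⟩, ?_⟩
    change c.natAbs • g = 0
    rw [← natCast_zsmul, Int.natCast_natAbs]
    rcases abs_choice c with h | h <;> rw [h]
    · exact hcg'
    · rw [neg_smul, hcg', neg_zero]
  have hfib : ∀ v, {g : G | f g = v}.Countable := by
    intro v
    by_cases hne : ∃ a : G, f a = v
    · obtain ⟨a, rfl⟩ := hne
      refine (hker.image (fun g => a + g)).mono ?_
      intro g hg
      refine ⟨g - a, ?_, by simp⟩
      have hg' : f g = f a := hg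
      simp [hg']
    · refine Set.countable_empty.mono fun g hg => hne ⟨g, hg⟩
  have : (Set.univ : Set G).Countable := by
    refine (Set.countable_iUnion hfib).mono fun g _ => ?_
    simp
  exact Set.not_countable_univ this

theorem hensel {K : Type*} [Field K] (c₁ c₂ c₃ : PowerSeries K)
    (h₁ : c₁ ∈ Ideal.span {(PowerSeries.X : PowerSeries K)})
    (h₂ : c₂ ∈ Ideal.span {(PowerSeries.X : PowerSeries K)})
    (h₃ : c₃ ∈ Ideal.span {(PowerSeries.X : PowerSeries K)}) :
    ∃ u : PowerSeries K, u ≠ 0 ∧ u ^ 3 = u ^ 2 - c₁ * u ^ 2 - c₂ * u - c₃ := by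
  set I := Ideal.span {(PowerSeries.X : PowerSeries K)} with hI
  let f : Polynomial (PowerSeries K) := Polynomial.X ^ 3 + Polynomial.C (c₁ - 1) * Polynomial.X ^ 2
    + Polynomial.C c₂ * Polynomial.X + Polynomial.C c₃
  have hmon : f.Monic := by
    simp only [f]; monicity!
  have hder : f.derivative.eval 1 = 1 + (2 * c₁ + c₂) := by
    simp [f]; ring
  obtain ⟨u, hu, hu1⟩ := HenselianRing.is_henselian (I := I) f hmon 1
    (by
      have : f.eval 1 = c₁ + c₂ + c₃ := by simp [f]
      rw [this]
      exact I.add_mem (I.add_mem h₁ h₂) h₃)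
    (by
      have : Ideal.Quotient.mk I (2 * c₁ + c₂) = 0 :=
        Ideal.Quotient.eq_zero_iff_mem.mpr (I.add_mem (I.mul_mem_left _ h₁) h₂)
      rw [hder, map_add, this, add_zero, map_one]
      exact isUnit_one)
  refine ⟨u, ?_, ?_⟩
  · rintro rfl
    have h1 : (1 : PowerSeries K) ∈ I := by
      rw [zero_sub] at hu1
      simpa using I.neg_mem hu1
    rw [hI, Ideal.mem_span_singleton, PowerSeries.X_dvd_iff] at h1
    simp at h1
  · simp only [f, Polynomial.IsRoot.def, Polynomial.eval_add, Polynomial.eval_pow,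
      Polynomial.eval_X, Polynomial.eval_mul, Polynomial.eval_C] at hu
    linear_combination hu

/-- every Laurent series becomes integral after multiplying by a power of the variable -/
theorem exists_pow_mul {K : Type*} [Field K] (a : LaurentSeries K) :
    ∃ n : ℕ, ∀ m, n ≤ m → ∃ r : PowerSeries K, a * (algebraMap (PowerSeries K) (LaurentSeries K) PowerSeries.X) ^ m =
      algebraMap (PowerSeries K) (LaurentSeries K) r := by
  obtain ⟨⟨r, s, n, rfl⟩, h⟩ := IsLocalization.surj (Submonoid.powers (PowerSeries.X : PowerSeries K)) a
  refine ⟨n, fun m hm => ⟨r * PowerSeries.X ^ (m - n), ?_⟩⟩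
  simp only [map_pow] at h
  rw [map_mul, ← h, map_pow, mul_assoc, ← pow_add, Nat.add_sub_cancel' hm]

theorem uncountable_points {K : Type*} [Field K] (W : WeierstrassCurve.Affine (LaurentSeries K))
    (hΔ : W.Δ ≠ 0) : Uncountable W.Point := by
  have : W.IsElliptic := ⟨isUnit_iff_ne_zero.mpr hΔ⟩
  let φ := algebraMap (PowerSeries K) (LaurentSeries K)
  have hφ : Function.Injective φ := IsFractionRing.injective _ _
  let t : PowerSeries K := PowerSeries.X
  obtain ⟨n₁, h₁⟩ := exists_pow_mul W.a₁
  obtain ⟨n₂, h₂⟩ := exists_pow_mul W.a₂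
  obtain ⟨n₃, h₃⟩ := exists_pow_mul W.a₃
  obtain ⟨n₄, h₄⟩ := exists_pow_mul W.a₄
  obtain ⟨n₆, h₆⟩ := exists_pow_mul W.a₆
  let N := n₁ + n₂ + n₃ + n₄ + n₆
  obtain ⟨r₁, h₁⟩ := h₁ N (by omega)
  obtain ⟨r₂, h₂⟩ := h₂ N (by omega)
  obtain ⟨r₃, h₃⟩ := h₃ N (by omega)
  obtain ⟨r₄, h₄⟩ := h₄ N (by omega)
  obtain ⟨r₆, h₆⟩ := h₆ N (by omega)
  change _ * φ t ^ N = φ r₁ at h₁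
  change _ * φ t ^ N = φ r₂ at h₂
  change _ * φ t ^ N = φ r₃ at h₃
  change _ * φ t ^ N = φ r₄ at h₄
  change _ * φ t ^ N = φ r₆ at h₆
  have ht : t ≠ 0 := PowerSeries.X_ne_zero
  have key : ∀ s : PowerSeries K, s ≠ 0 → ∃ x y, W.Nonsingular x y ∧
      -x / y = φ (t ^ (N + 1) * s) := by
    intro s hs
    have hmem : ∀ r : PowerSeries K, t * r ∈ Ideal.span {(PowerSeries.X : PowerSeries K)} :=
      fun r => Ideal.mul_mem_right _ _ (Ideal.mem_span_singleton_self _)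
    let z := t ^ (N + 1) * s
    have hz : z ≠ 0 := mul_ne_zero (pow_ne_zero _ ht) hs
    obtain ⟨u, hu0, hu⟩ := hensel (t * (r₁ * s + r₂ * s * z)) (t * (r₃ * s * z ^ 2 + r₄ * s * z ^ 3))
      (t * (r₆ * s * z ^ 5)) (hmem _) (hmem _) (hmem _)
    have hzφ : φ z ≠ 0 := by simpa using hφ.ne hz
    have huφ : φ u ≠ 0 := by simpa using hφ.ne hu0
    have hzz : φ z = φ t ^ N * (φ t * φ s) := by simp only [z, map_mul, map_pow]; ring
    refine ⟨φ u / φ z ^ 2, -φ u / φ z ^ 3, equation_iff_nonsingular.mp ?_, ?_⟩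
    · have hu' := congrArg φ hu
      simp only [map_sub, map_add, map_mul, map_pow] at hu'
      rw [← h₁, ← h₂, ← h₃, ← h₄, ← h₆] at hu'
      have e1 : ∀ a : LaurentSeries K, φ t * (a * φ t ^ N * φ s) = a * φ z := by
        intro a; rw [hzz]; ring
      have hu2 : φ u ^ 3 = φ u ^ 2 - (W.a₁ * φ z + W.a₂ * φ z ^ 2) * φ u ^ 2
          - (W.a₃ * φ z ^ 3 + W.a₄ * φ z ^ 4) * φ u - W.a₆ * φ z ^ 6 := by
        rw [hu']
        linear_combination -φ u ^ 2 * e1 W.a₁ - φ u ^ 2 * φ z * e1 W.a₂ - φ u * φ z ^ 2 * e1 W.a₃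
          - φ u * φ z ^ 3 * e1 W.a₄ - φ z ^ 5 * e1 W.a₆
      rw [equation_iff']
      field_simp
      linear_combination -hu2
    · change _ = φ z
      field_simp
  have hunc : Uncountable (PowerSeries K) := by
    have hinj : Function.Injective (fun (g : ℕ → Bool) => PowerSeries.mk fun n => if g n then (1 : K) else 0) := by
      intro g g' h
      funext n
      have := congrArg (PowerSeries.coeff n) h
      simp only [PowerSeries.coeff_mk] at this
      cases h1 : g n <;> cases h2 : g' n <;> simp_all
    have : Uncountable (ℕ → Bool) := by
      rw [← Cardinal.aleph0_lt_mk_iff]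
      simpa using Cardinal.cantor Cardinal.aleph0
    exact hinj.uncountable
  by_contra hc
  rw [not_uncountable_iff] at hc
  choose! X Y hXY hz using key
  have : Set.Countable ({0}ᶜ : Set (PowerSeries K)) := by
    have hinj : Function.Injective (fun s : ({0}ᶜ : Set (PowerSeries K)) =>
        (Point.some (X s) (Y s) (hXY s s.2) : W.Point)) := by
      intro s s' h
      simp only [Point.some.injEq] at h
      have e := hz s s.2
      rw [h.1, h.2, hz s' s'.2] at e
      exact Subtype.ext (mul_left_cancel₀ (pow_ne_zero _ ht) (hφ e)).symm
    exact hinj.countable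
  have huniv : (Set.univ : Set (PowerSeries K)).Countable := by
    refine (this.union (Set.countable_singleton 0)).mono fun s _ => ?_
    by_cases h : s = 0 <;> simp [h]
  exact Set.not_countable_univ huniv

theorem descend {F : Type*} [Field F] (W : WeierstrassCurve F) :
    ∃ (k : Subfield F) (W₀ : WeierstrassCurve k), Countable k ∧ W = W₀⁄F := by
  let S : Set F := {W.a₁, W.a₂, W.a₃, W.a₄, W.a₆}
  have hS : S ⊆ Subfield.closure S := Subfield.subset_closure
  refine ⟨Subfield.closure S, ⟨⟨W.a₁, hS ?_⟩, ⟨W.a₂, hS ?_⟩, ⟨W.a₃, hS ?_⟩, ⟨W.a₄, hS ?_⟩,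
    ⟨W.a₆, hS ?_⟩⟩, ?_, ?_⟩
  iterate 5 simp [S]
  · rw [← Cardinal.mk_le_aleph0_iff]
    refine (Subfield.cardinalMk_closure_le_max S).trans (max_le ?_ le_rfl)
    rw [Cardinal.mk_le_aleph0_iff]
    exact (Set.toFinite S).countable
  · ext <;> rfl

end Helpers

open scoped Classical in
theorem statement11 (K : Type*) [Field K]
    (W : WeierstrassCurve.Affine (LaurentSeries K)) (hΔ : W.Δ ≠ 0) :
    Cardinal.aleph0 ≤ Module.rank ℚ (ℚ ⊗[ℤ] W.Point) := by
  have hunc := uncountable_points W hΔ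
  obtain ⟨k, W₀, hk, rfl⟩ := descend W
  have hΔ₀ : W₀.Δ ≠ 0 := by
    intro h0
    apply hΔ
    change (W₀.map (algebraMap k (LaurentSeries K))).Δ = 0
    rw [WeierstrassCurve.map_Δ, h0, map_zero]
  exact rank_inf (countable_torsion fun p hp => countable_ptorsion W₀ hΔ₀ hunc p hp)
end

section
/- Let $F$ be an uncountable algebraically closed field and let $W$ be an elliptic curve over $F$ (a Weierstrass curve over $F$ with nonzero discriminant). Then the rank of the group $W(F)$ of $F$-rational points of $W$ equals the cardinality of $F$, i.e. $\dim_{\mathbb{Q}}(W(F) \otimes_{\mathbb{Z}} \mathbb{Q})$ equals the cardinality of $F$. -/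
open TensorProduct

namespace EllRank

open Polynomial WeierstrassCurve

/-- Homogenised numerator of the duplication map on x-coordinates. -/
def dupA {R : Type*} [CommRing R] (W : WeierstrassCurve R) (a b : R) : R :=
  a ^ 4 - W.b₄ * a ^ 2 * b ^ 2 - 2 * W.b₆ * a * b ^ 3 - W.b₈ * b ^ 4

/-- Homogenised denominator of the duplication map on x-coordinates. -/
def dupB {R : Type*} [CommRing R] (W : WeierstrassCurve R) (a b : R) : R :=
  4 * a ^ 3 * b + W.b₂ * a ^ 2 * b ^ 2 + 2 * W.b₄ * a * b ^ 3 + W.b₆ * b ^ 4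

lemma dup_ne_zero {F : Type*} [Field F] (W : WeierstrassCurve F) (hΔ : W.Δ ≠ 0) (a b : F)
    (hA : dupA W a b = 0) (hB : dupB W a b = 0) : a = 0 ∧ b = 0 := by
  have : W.IsElliptic := ⟨isUnit_iff_ne_zero.mpr hΔ⟩
  by_contra hab
  have hx : (![a ^ 2, 2 * a * b, b ^ 2] : Fin 3 → F) ≠ 0 := by
    intro h
    have h0 := congrFun h 0
    have h2 := congrFun h 2
    simp at h0 h2
    exact hab ⟨h0, h2⟩
  refine W.addSubMap_ne_zero hx ?_
  unfold dupA at hA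
  unfold dupB at hB
  funext i
  fin_cases i
  · simp [addSubMap]; linear_combination hA
  · simp [addSubMap]; linear_combination hB
  · simp [addSubMap]; ring

/-- Iterated duplication as polynomials in the x-coordinate. -/
noncomputable def dupPoly {F : Type*} [Field F] (W : WeierstrassCurve F) : ℕ → F[X] × F[X]
  | 0 => (X, 1)
  | k + 1 => (dupA (W.map C) (dupPoly W k).1 (dupPoly W k).2,
      dupB (W.map C) (dupPoly W k).1 (dupPoly W k).2)

lemma eval_dupA {F : Type*} [Field F] (W : WeierstrassCurve F) (a b : F[X]) (x : F) :
    (dupA (W.map C) a b).eval x = dupA W (a.eval x) (b.eval x) := by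
  simp [dupA]

lemma eval_dupB {F : Type*} [Field F] (W : WeierstrassCurve F) (a b : F[X]) (x : F) :
    (dupB (W.map C) a b).eval x = dupB W (a.eval x) (b.eval x) := by
  simp [dupB]

lemma dupPoly_no_common_root {F : Type*} [Field F] (W : WeierstrassCurve F) (hΔ : W.Δ ≠ 0)
    (x : F) (k : ℕ) : (dupPoly W k).1.eval x ≠ 0 ∨ (dupPoly W k).2.eval x ≠ 0 := by
  induction k with
  | zero => simp [dupPoly]
  | succ k ih =>
    by_contra! h
    simp only [dupPoly, eval_dupA, eval_dupB] at h
    have := dup_ne_zero W hΔ _ _ h.1 h.2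
    tauto

lemma dupPoly_coprime {F : Type*} [Field F] [IsAlgClosed F] (W : WeierstrassCurve F)
    (hΔ : W.Δ ≠ 0) (k : ℕ) : IsCoprime (dupPoly W k).1 (dupPoly W k).2 := by
  rw [Polynomial.isCoprime_iff_aeval_ne_zero_of_isAlgClosed F F]
  intro a
  simpa using dupPoly_no_common_root W hΔ a k

lemma dupPoly_degree {F : Type*} [Field F] (W : WeierstrassCurve F) (k : ℕ) :
    (dupPoly W k).1.degree = (4 ^ k : ℕ) ∧ (dupPoly W k).2.degree < (4 ^ k : ℕ) := by
  induction k with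
  | zero => simp [dupPoly]
  | succ k ih =>
    obtain ⟨hA, hB⟩ := ih
    simp only [dupPoly, dupA, dupB, map_b₂, map_b₄, map_b₆, map_b₈]
    set A := (dupPoly W k).1
    set B := (dupPoly W k).2
    set N := 4 ^ k with hN
    have hNpos : 0 < N := by positivity
    have hA' : A.natDegree = N := natDegree_eq_of_degree_eq_some hA
    have hB' : B.natDegree ≤ N - 1 := by
      by_cases h0 : B = 0
      · simp [h0]
      · have := (natDegree_lt_iff_degree_lt h0).2 hB
        omega
    have key : ∀ (c : F[X]) (i j : ℕ), c.natDegree = 0 → i + j = 4 → 0 < j →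
        (c * A ^ i * B ^ j).degree < ((4 ^ (k + 1) : ℕ) : WithBot ℕ) := by
      intro c i j hc hij hj
      refine lt_of_le_of_lt degree_le_natDegree ?_
      rw [Nat.cast_lt]
      have h1 : (c * A ^ i * B ^ j).natDegree ≤ 0 + i * N + j * (N - 1) := by
        refine natDegree_mul_le_of_le (natDegree_mul_le_of_le hc.le ?_) ?_
        · exact natDegree_pow_le_of_le _ hA'.le
        · exact natDegree_pow_le_of_le _ hB'
      have h2 : j * (N - 1) < j * N := Nat.mul_lt_mul_of_pos_left (by omega) hj
      have h3 : i * N + j * N = 4 ^ (k + 1) := by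
        rw [← add_mul, hij, hN]; ring
      omega
    have hsub : ∀ p q : F[X], p.degree < ((4 ^ (k + 1) : ℕ) : WithBot ℕ) →
        q.degree < ((4 ^ (k + 1) : ℕ) : WithBot ℕ) →
        (p + q).degree < ((4 ^ (k + 1) : ℕ) : WithBot ℕ) := fun p q hp hq =>
      (degree_add_le _ _).trans_lt (max_lt hp hq)
    constructor
    · have e : A ^ 4 - C W.b₄ * A ^ 2 * B ^ 2 - 2 * C W.b₆ * A * B ^ 3 - C W.b₈ * B ^ 4
          = A ^ 4 + (C (-W.b₄) * A ^ 2 * B ^ 2 + C (-2 * W.b₆) * A ^ 1 * B ^ 3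
            + C (-W.b₈) * A ^ 0 * B ^ 4) := by
        simp only [C_neg, C_mul, C_ofNat]; ring
      rw [e, degree_add_eq_left_of_degree_lt]
      · rw [degree_pow, hA, hN, pow_succ]; simp [mul_comm]
      · have : (A ^ 4).degree = ((4 ^ (k + 1) : ℕ) : WithBot ℕ) := by
          rw [degree_pow, hA, hN, pow_succ]; simp [mul_comm]
        rw [this]
        refine hsub _ _ (hsub _ _ ?_ ?_) ?_ <;>
          exact key _ _ _ (natDegree_C _) (by norm_num) (by norm_num)
    · have e : 4 * A ^ 3 * B + C W.b₂ * A ^ 2 * B ^ 2 + 2 * C W.b₄ * A * B ^ 3 + C W.b₆ * B ^ 4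
          = C 4 * A ^ 3 * B ^ 1 + C W.b₂ * A ^ 2 * B ^ 2 + C (2 * W.b₄) * A ^ 1 * B ^ 3
            + C W.b₆ * A ^ 0 * B ^ 4 := by
        simp only [C_mul, C_ofNat]; ring
      rw [e]
      refine hsub _ _ (hsub _ _ (hsub _ _ ?_ ?_) ?_) ?_ <;>
          exact key _ _ _ (natDegree_C _) (by norm_num) (by norm_num)

lemma cross_ne_zero {F : Type*} [Field F] [IsAlgClosed F] (W : WeierstrassCurve F)
    (hΔ : W.Δ ≠ 0) {i j : ℕ} (hij : i < j) :
    (dupPoly W i).1 * (dupPoly W j).2 - (dupPoly W j).1 * (dupPoly W i).2 ≠ 0 := by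
  intro h
  have hdvd : (dupPoly W j).1 ∣ (dupPoly W i).1 :=
    (dupPoly_coprime W hΔ j).dvd_of_dvd_mul_right ⟨_, sub_eq_zero.mp h⟩
  have hne : (dupPoly W i).1 ≠ 0 := by
    intro h0
    have := (dupPoly_degree W i).1
    rw [h0, degree_zero] at this
    exact absurd this (WithBot.bot_ne_coe)
  have := degree_le_of_dvd hdvd hne
  rw [(dupPoly_degree W i).1, (dupPoly_degree W j).1, Nat.cast_le] at this
  exact absurd (Nat.pow_lt_pow_right (by norm_num : 1 < 4) hij) (by omega)

/-- `(a : b)` represents the x-coordinate of `P` (allowing `(0 : 0)`). -/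
def Rep {F : Type*} [Field F] {W : Affine F} (P : W.Point) (a b : F) : Prop :=
  match P with
  | .zero => b = 0
  | .some x _ _ => a = x * b

open scoped Classical in
lemma rep_double {F : Type*} [Field F] {W : Affine F} (P : W.Point) (a b : F) (h : Rep P a b) :
    Rep (P + P) (dupA W a b) (dupB W a b) := by
  match P, h with
  | .zero, h =>
    have h : b = 0 := h
    have : (Affine.Point.zero + Affine.Point.zero : W.Point) = .zero := add_zero (0 : W.Point)
    rw [this]
    simp [Rep, dupB, h]
  | .some x y hP, h =>
    have h : a = x * b := h
    have heq := (W.equation_iff x y).1 hP.1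
    by_cases hy : y = W.negY x y
    · rw [Affine.Point.add_self_of_Y_eq hy]
      change dupB W a b = 0
      rw [Affine.negY] at hy
      simp only [dupB, h, b₂, b₄, b₆]
      linear_combination (-4 * b ^ 4) * heq + b ^ 4 * (2 * y + W.a₁ * x + W.a₃) * hy
    · rw [Affine.Point.add_self_of_Y_ne hy]
      change dupA W a b = W.addX x x (W.slope x x y y) * dupB W a b
      rw [Affine.slope_of_Y_ne rfl hy, Affine.addX]
      have hd : y - W.negY x y ≠ 0 := sub_ne_zero.mpr hy
      have hB : dupB W a b = b ^ 4 * (y - W.negY x y) ^ 2 := by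
        simp only [dupB, h, b₂, b₄, b₆, Affine.negY]
        linear_combination (-4 * b ^ 4) * heq
      rw [hB]
      field_simp
      simp only [dupA, h, b₄, b₆, b₈, Affine.negY]
      linear_combination b ^ 4 * (8 * x + W.a₁ ^ 2 + 4 * W.a₂) * heq

open scoped Classical in
lemma rep_iter {F : Type*} [Field F] {W : Affine F} {x y : F} (hP : W.Nonsingular x y) (k : ℕ) :
    Rep ((2 ^ k) • (Affine.Point.some x y hP)) ((dupPoly W k).1.eval x)
      ((dupPoly W k).2.eval x) := by
  induction k with
  | zero => simp [Rep, dupPoly]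
  | succ k ih =>
    rw [pow_succ, mul_two, add_nsmul]
    simp only [dupPoly, eval_dupA, eval_dupB]
    exact rep_double _ _ _ ih

lemma rep_cross {F : Type*} [Field F] {W : Affine F} (P : W.Point) {a b c d : F}
    (h : Rep P a b) (h' : Rep P c d) : a * d - c * b = 0 := by
  match P, h, h' with
  | .zero, h, h' =>
    have h : b = 0 := h
    have h' : d = 0 := h'
    simp [h, h']
  | .some x y hP, h, h' =>
    have h : a = x * b := h
    have h' : c = x * d := h'
    rw [h, h']; ring

lemma exists_pow_eq {G : Type*} [AddCommGroup G] (P : G) (n : ℕ) (hn : 0 < n) (h : n • P = 0) :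
    ∃ i j : ℕ, i < j ∧ (2 ^ i) • P = (2 ^ j) • P := by
  have : NeZero n := ⟨hn.ne'⟩
  obtain ⟨i, j, hne, he⟩ := Finite.exists_ne_map_eq_of_infinite (fun i : ℕ => ((2 ^ i : ℕ) : ZMod n))
  have key : (2 ^ i) • P = (2 ^ j) • P := by
    rw [nsmul_eq_nsmul_iff_modEq]
    exact ((ZMod.natCast_eq_natCast_iff _ _ _).1 he).of_dvd (addOrderOf_dvd_of_nsmul_eq_zero h)
  rcases lt_or_gt_of_ne hne with h | h
  · exact ⟨i, j, h, key⟩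
  · exact ⟨j, i, h, key.symm⟩

lemma countable_fiber {F : Type*} [Field F] (W : Affine F) (p : F[X]) (hp : p ≠ 0) :
    {P : W.Point | ∃ x y h, P = .some x y h ∧ p.eval x = 0}.Countable := by
  have hroots : {x : F | p.eval x = 0}.Countable := by
    exact (Polynomial.finite_setOf_isRoot hp).countable
  have hsub : {P : W.Point | ∃ x y h, P = .some x y h ∧ p.eval x = 0} ⊆
      ⋃ x ∈ {x : F | p.eval x = 0}, {P : W.Point | ∃ y h, P = .some x y h} := by
    rintro P ⟨x, y, h, rfl, hx⟩
    simp only [Set.mem_iUnion]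
    exact ⟨x, hx, y, h, rfl⟩
  refine Set.Countable.mono hsub (hroots.biUnion fun x _ => ?_)
  by_cases hne : ∃ y, W.Nonsingular x y
  · obtain ⟨y₀, h₀⟩ := hne
    refine Set.Countable.mono ?_
      (Set.Finite.countable (Set.toFinite {Affine.Point.some x y₀ h₀, -Affine.Point.some x y₀ h₀}))
    rintro P ⟨y, h, rfl⟩
    exact Affine.Point.X_eq_iff.1 rfl
  · convert Set.countable_empty
    ext P
    simp only [Set.mem_ofPred_eq, Set.mem_empty_iff_false, iff_false]
    rintro ⟨y, h, -⟩
    exact hne ⟨y, h⟩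

open scoped Classical in
lemma countable_torsion {F : Type*} [Field F] [IsAlgClosed F] (W : Affine F) (hΔ : W.Δ ≠ 0) :
    {P : W.Point | ∃ n : ℕ, 0 < n ∧ n • P = 0}.Countable := by
  have : {P : W.Point | ∃ n : ℕ, 0 < n ∧ n • P = 0} ⊆ {0} ∪ ⋃ i : ℕ, ⋃ j : ℕ, ⋃ _ : i < j,
      {P : W.Point | ∃ x y h, P = .some x y h ∧
        ((dupPoly W i).1 * (dupPoly W j).2 - (dupPoly W j).1 * (dupPoly W i).2).eval x = 0} := by
    rintro P ⟨n, hn, hP⟩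
    match P, hP with
    | .zero, hP => left; rfl
    | .some x y h, hP =>
      right
      obtain ⟨i, j, hij, he⟩ := exists_pow_eq _ n hn hP
      simp only [Set.mem_iUnion]
      refine ⟨i, j, hij, x, y, h, rfl, ?_⟩
      have h1 := rep_iter h i
      have h2 := rep_iter h j
      rw [← he] at h2
      simpa using rep_cross _ h1 h2
  refine Set.Countable.mono this ?_
  refine (Set.countable_singleton _).union ?_
  refine Set.countable_iUnion fun i => Set.countable_iUnion fun j => Set.countable_iUnion fun hij => ?_
  exact countable_fiber W _ (cross_ne_zero W hΔ hij)

lemma exists_y {F : Type*} [Field F] [IsAlgClosed F] (W : Affine F) (hΔ : W.Δ ≠ 0) (x : F) :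
    ∃ y, W.Nonsingular x y := by
  obtain ⟨y, hy⟩ := IsAlgClosed.exists_root
    (C (1 : F) * X ^ 2 + C (W.a₁ * x + W.a₃) * X
      + C (-(x ^ 3 + W.a₂ * x ^ 2 + W.a₄ * x + W.a₆)))
    (by rw [degree_quadratic one_ne_zero]; norm_num)
  refine ⟨y, (W.equation_iff_nonsingular_of_Δ_ne_zero hΔ).1 ?_⟩
  rw [W.equation_iff]
  simp [Polynomial.IsRoot] at hy
  linear_combination hy

lemma mk_point {F : Type*} [Field F] [IsAlgClosed F] [Uncountable F] (W : Affine F)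
    (hΔ : W.Δ ≠ 0) : Cardinal.mk W.Point = Cardinal.mk F := by
  have hinf : Cardinal.aleph0 ≤ Cardinal.mk F := Cardinal.aleph0_le_mk F
  apply le_antisymm
  · let f : W.Point → Option (F × F) := fun P => match P with
      | .zero => none
      | .some x y _ => some (x, y)
    have hf : Function.Injective f := by
      intro P Q h
      match P, Q, h with
      | .zero, .zero, _ => rfl
      | .zero, .some _ _ _, h => simp [f] at h
      | .some _ _ _, .zero, h => simp [f] at h
      | .some _ _ _, .some _ _ _, h =>
        simp [f] at h
        obtain ⟨rfl, rfl⟩ := h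
        rfl
    refine (Cardinal.mk_le_of_injective hf).trans ?_
    rw [Cardinal.mk_option, Cardinal.mk_prod, Cardinal.lift_id, Cardinal.mul_eq_self hinf]
    exact (Cardinal.add_one_eq hinf).le
  · choose y hy using exists_y W hΔ
    refine Cardinal.mk_le_of_injective (f := fun x => Affine.Point.some x (y x) (hy x)) ?_
    intro x x' h
    simp at h
    exact h.1

end EllRank

open scoped Classical in
theorem statement12 (F : Type*) [Field F] [IsAlgClosed F] [Uncountable F]
    (W : WeierstrassCurve.Affine F) (hΔ : W.Δ ≠ 0) :
    Module.rank ℚ (ℚ ⊗[ℤ] W.Point) = Cardinal.mk F := by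
  have hG := EllRank.mk_point W hΔ
  have hT := EllRank.countable_torsion W hΔ
  have hF : Cardinal.aleph0 < Cardinal.mk F := Cardinal.aleph0_lt_mk
  let f : W.Point →ₗ[ℤ] ℚ ⊗[ℤ] W.Point := TensorProduct.mk ℤ ℚ W.Point 1
  have hloc : IsLocalizedModule (nonZeroDivisors ℤ) f :=
    (isLocalizedModule_iff_isBaseChange (nonZeroDivisors ℤ) ℚ f).mpr
      (TensorProduct.isBaseChange ℤ W.Point ℚ)
  have hker : {P : W.Point | f P = 0}.Countable := by
    refine hT.mono ?_
    intro P hP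
    obtain ⟨s, hs⟩ := (IsLocalizedModule.eq_zero_iff (nonZeroDivisors ℤ) f).1 hP
    have hs0 : (s : ℤ) ≠ 0 := nonZeroDivisors.coe_ne_zero s
    refine ⟨(s : ℤ).natAbs, Int.natAbs_pos.mpr hs0, ?_⟩
    have hs' : (s : ℤ) • P = 0 := hs
    rcases Int.natAbs_eq (s : ℤ) with h | h
    · rw [h, natCast_zsmul] at hs'; exact hs'
    · rw [h, neg_zsmul, natCast_zsmul, neg_eq_zero] at hs'; exact hs'
  have hle : Cardinal.mk (ℚ ⊗[ℤ] W.Point) ≤ Cardinal.mk F := by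
    have h := Cardinal.mk_le_of_surjective (IsLocalizedModule.mk'_surjective (nonZeroDivisors ℤ) f)
    refine h.trans ?_
    rw [Cardinal.mk_prod, hG, Cardinal.lift_uzero]
    refine (mul_le_mul_right (Cardinal.lift_le_aleph0.2 Cardinal.mk_le_aleph0) _).trans ?_
    exact (Cardinal.mul_aleph0_eq hF.le).le
  have hge : Cardinal.mk F ≤ Cardinal.mk (ℚ ⊗[ℤ] W.Point) := by
    have h : Cardinal.mk W.Point ≤ Cardinal.mk (ℚ ⊗[ℤ] W.Point) * Cardinal.aleph0 := by
      refine Cardinal.mk_le_mk_mul_of_mk_preimage_le f fun v => ?_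
      rw [Cardinal.mk_le_aleph0_iff]
      change (f ⁻¹' {v}).Countable
      by_cases hv : ∃ Q, f Q = v
      · obtain ⟨Q, rfl⟩ := hv
        refine (hker.image (fun P => P + Q)).mono ?_
        intro P hP
        refine ⟨P - Q, ?_, sub_add_cancel P Q⟩
        have hP' : f P = f Q := hP
        simp [hP']
      · convert Set.countable_empty
        ext P
        simp only [Set.mem_preimage, Set.mem_singleton_iff, Set.mem_empty_iff_false, iff_false]
        exact fun h => hv ⟨P, h⟩
    rw [hG] at h
    by_contra hlt
    push Not at hlt
    exact absurd h (not_le.2 (Cardinal.mul_lt_of_lt hF.le hlt hF))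
  have heq := le_antisymm hle hge
  rw [← heq]
  apply Module.Free.rank_eq_mk_of_infinite_lt
  rw [heq]
  simp [hF]
end
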